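/- arXiv:2602.12831 — 2 statements merged into one kernel-verified Lean document; each statement's English description precedes it below -/
import Mathlib

section
/- Let A be a finite set with |A| = 2m and m ≥ 1. Then the product over all perfect matchings M of A of the operators CZ_M equals the complete CZ-block on A: ∏_{M ∈ PM(A)} CZ_M = CZ⟨A⟩, where PM(A) is the set of all perfect matchings of A. (Equivalently, since all CZ gates commute and square to the identity, each unordered pair of A occurs in an odd number of perfect matchings.) -/
open Complex Matrix Finset

/-- n-qubit operators: `2^n × 2^n` complex matrices indexed by bit strings
`x : Fin n → Bool` (qubit `i` of {1,…,n} corresponds to index `i-1 : Fin n`). -/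
abbrev NOp (n : ℕ) := Matrix (Fin n → Bool) (Fin n → Bool) ℂ

noncomputable section

/-- Pauli `X = [[0,1],[1,0]]`. -/
def Xg : Matrix Bool Bool ℂ := fun a b => if a = b then 0 else 1

/-- Pauli `Y = [[0,-i],[i,0]]` (indices `false, true` in this order). -/
def Yg : Matrix Bool Bool ℂ :=
  fun a b => if a = b then 0 else if a then Complex.I else -Complex.I

/-- Pauli `Z = diag(1,-1)`. -/
def Zg : Matrix Bool Bool ℂ := Matrix.diagonal (fun a => if a then -1 else 1)

/-- Hadamard `H = (1/√2)[[1,1],[1,-1]]`. -/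
def Hg : Matrix Bool Bool ℂ :=
  fun a b => ((Real.sqrt 2 : ℝ) : ℂ)⁻¹ * (if a && b then -1 else 1)

/-- Phase gate `P = diag(1, i)`. -/
def Pg : Matrix Bool Bool ℂ := Matrix.diagonal (fun a => if a then Complex.I else 1)

/-- `g_A = ∏_{i ∈ A} g_i`: the n-qubit operator acting as the single-qubit gate `g`
on every qubit of `A` and as the identity on all other qubits.  (Since the factors
`g_i` act on distinct tensor legs, the product is the entrywise formula below;
`layer g {k}` is the single-qubit operator `g_k`.) -/
def layer {n : ℕ} (g : Matrix Bool Bool ℂ) (A : Finset (Fin n)) : NOp n :=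
  fun x y => ∏ j, if j ∈ A then g (x j) (y j) else if x j = y j then 1 else 0

/-- `CZ_{i,j}`: diagonal entry `(-1)^{x_i x_j}` at bit string `x`. -/
def czPair {n : ℕ} (i j : Fin n) : NOp n :=
  Matrix.diagonal (fun x => if x i && x j then -1 else 1)

/-- The complete CZ-block `CZ⟨A⟩ = ∏_{{i,j} ⊆ A, i ≠ j} CZ_{i,j}`,
one factor per unordered pair (2-element subset) of `A`. -/
def czBlock {n : ℕ} (A : Finset (Fin n)) : NOp n :=
  Matrix.diagonal
    (fun x => ∏ p ∈ A.powersetCard 2, if ∀ i ∈ p, x i = true then (-1 : ℂ) else 1)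

/-- `CZ_M = ∏_{{i,j} ∈ M} CZ_{i,j}` for a set `M` of unordered pairs
(2-element Finsets), e.g. a perfect matching. -/
def czSet {n : ℕ} (M : Finset (Finset (Fin n))) : NOp n :=
  Matrix.diagonal
    (fun x => ∏ p ∈ M, if ∀ i ∈ p, x i = true then (-1 : ℂ) else 1)

/-- `M` is a perfect matching of the finite set `A`: a partition of `A`
into unordered pairs (2-element subsets). -/
def IsPerfectMatching {α : Type*} [DecidableEq α] (A : Finset α)
    (M : Finset (Finset α)) : Prop :=
  (∀ p ∈ M, p.card = 2) ∧ (∀ p ∈ M, ∀ q ∈ M, p ≠ q → Disjoint p q) ∧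
    M.biUnion id = A

/-- `CX_{A→B} = ∏_{i∈A, j∈B} CX_{i→j}` for disjoint `A`, `B`: the permutation
operator sending basis state `y` to the state whose bit at each `j ∈ B` is
`y_j ⊕ (⊕_{i∈A} y_i)`, all other bits unchanged (this is the product of the
individual commuting CNOTs `CX_{i→j}`, which replace `y_j` by `y_j ⊕ y_i`). -/
def cxBlock {n : ℕ} (A B : Finset (Fin n)) : NOp n :=
  fun x y =>
    if x = (fun j => if j ∈ B then
        xor (y j) (Nat.bodd (A.filter (fun i => y i = true)).card) else y j)
    then 1 else 0

end

open scoped Classical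

/-- All `CZ_M` operators are diagonal, hence commute. -/
lemma czSet_commute {n : ℕ} (M₁ M₂ : Finset (Finset (Fin n))) :
    Commute (czSet M₁) (czSet M₂) := by
  unfold czSet
  rw [Commute, SemiconjBy, Matrix.diagonal_mul_diagonal, Matrix.diagonal_mul_diagonal]
  exact congrArg Matrix.diagonal (funext fun x => mul_comm _ _)

/-!
CZ gates commute and square to the identity, so `czSet` turns symmetric differences into products,
and a product of operators `CZ_M` is the product of the gates `CZ_p` over the pairs `p` lying in an
odd number of the `M`. When `|A| = 2m`, matching a fixed element with each of the other `2m - 1`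
shows that `A` has `(2m - 1)‼` perfect matchings. Those containing a given pair `p ⊆ A` correspond
to the perfect matchings of `A \ p`, so their number is `(2m - 3)‼`, which is odd.
-/

lemma card_sdiff_of_mem_powersetCard {α : Type*} [DecidableEq α] {A p : Finset α} {k : ℕ}
    (hp : p ∈ A.powersetCard k) : #(A \ p) = #A - k := by
  obtain ⟨hpA, hpk⟩ := mem_powersetCard.mp hp
  rw [card_sdiff_of_subset hpA, hpk]

lemma pair_mem_powersetCard_two {α : Type*} [DecidableEq α] {A : Finset α} {a b : α}
    (ha : a ∈ A) (hb : b ∈ A.erase a) : {a, b} ∈ A.powersetCard 2 :=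
  mem_powersetCard.mpr ⟨insert_subset ha (singleton_subset_iff.mpr (mem_of_mem_erase hb)),
    card_pair (ne_of_mem_erase hb).symm⟩

lemma prod_symmDiff_of_mul_self_eq_one {ι R : Type*} [DecidableEq ι] [CommMonoid R] {f : ι → R}
    {s t : Finset ι} (hf : ∀ i ∈ s ∩ t, f i * f i = 1) :
    ∏ i ∈ symmDiff s t, f i = (∏ i ∈ s, f i) * ∏ i ∈ t, f i := by
  have hinter : (∏ i ∈ s ∩ t, f i) * ∏ i ∈ s ∩ t, f i = 1 := by
    rw [← prod_mul_distrib]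
    exact prod_eq_one hf
  calc
    ∏ i ∈ symmDiff s t, f i = (∏ i ∈ s \ t, f i) * ∏ i ∈ t \ s, f i :=
      prod_union disjoint_sdiff_sdiff
    _ = ((∏ i ∈ s ∩ t, f i) * ∏ i ∈ s \ t, f i) * ((∏ i ∈ s ∩ t, f i) * ∏ i ∈ t \ s, f i) := by
      rw [mul_mul_mul_comm, hinter, one_mul]
    _ = (∏ i ∈ s, f i) * ∏ i ∈ t, f i := by
      rw [prod_inter_mul_prod_sdiff, inter_comm, prod_inter_mul_prod_sdiff]

section PerfectMatching

open scoped Nat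

variable {α : Type*} [DecidableEq α] {A p : Finset α} {M : Finset (Finset α)} {a : α}

namespace IsPerfectMatching

lemma pairwiseDisjoint (hM : IsPerfectMatching A M) :
    (M : Set (Finset α)).PairwiseDisjoint id :=
  fun p hp q hq => hM.2.1 p hp q hq

protected lemma subset (hM : IsPerfectMatching A M) (hp : p ∈ M) : p ⊆ A :=
  hM.2.2 ▸ subset_biUnion_of_mem id hp

protected lemma mem_powersetCard (hM : IsPerfectMatching A M) (hp : p ∈ M) :
    p ∈ A.powersetCard 2 :=
  mem_powersetCard.mpr ⟨hM.subset hp, hM.1 p hp⟩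

lemma disjoint_of_sdiff (hM : IsPerfectMatching (A \ p) M) {q : Finset α} (hq : q ∈ M) :
    Disjoint p q :=
  disjoint_sdiff.mono_right (hM.subset hq)

lemma notMem_of_sdiff (hM : IsPerfectMatching (A \ p) M) : p ∉ M := by
  intro hp
  have hp_empty : p = ∅ := (disjoint_self_iff_empty p).mp (hM.disjoint_of_sdiff hp)
  simpa [hp_empty] using hM.1 p hp

protected lemma erase (hM : IsPerfectMatching A M) (hp : p ∈ M) :
    IsPerfectMatching (A \ p) (M.erase p) := by
  refine ⟨fun q hq => hM.1 q (mem_of_mem_erase hq), fun q hq r hr =>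
    hM.2.1 q (mem_of_mem_erase hq) r (mem_of_mem_erase hr), ?_⟩
  have hdisj : Disjoint p ((M.erase p).biUnion id) :=
    (disjoint_biUnion_right ..).mpr fun q hq =>
      hM.2.1 p hp q (mem_of_mem_erase hq) (ne_of_mem_erase hq).symm
  have hunion : p ∪ (M.erase p).biUnion id = A := by
    calc
      p ∪ (M.erase p).biUnion id = (insert p (M.erase p)).biUnion id := by rw [biUnion_insert, id]
      _ = A := by rw [insert_erase hp, hM.2.2]
  rw [← hunion, union_sdiff_cancel_left hdisj]

protected lemma insert (hM : IsPerfectMatching (A \ p) M) (hp : p ∈ A.powersetCard 2) :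
    IsPerfectMatching A (insert p M) := by
  obtain ⟨hpA, hp2⟩ := mem_powersetCard.mp hp
  have hdisj : (insert p M : Set (Finset α)).PairwiseDisjoint id :=
    hM.pairwiseDisjoint.insert fun q hq _ => hM.disjoint_of_sdiff hq
  refine ⟨(forall_mem_insert ..).mpr ⟨hp2, hM.1⟩, fun q hq r hr => ?_, ?_⟩
  · exact hdisj (mem_insert.mp hq) (mem_insert.mp hr)
  · rw [biUnion_insert, hM.2.2, id, union_sdiff_of_subset hpA]

lemma existsUnique_pair_mem (hM : IsPerfectMatching A M) (ha : a ∈ A) :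
    ∃! b, b ∈ A.erase a ∧ {a, b} ∈ M := by
  obtain ⟨p, hp, hap⟩ : ∃ p ∈ M, a ∈ p := mem_biUnion.mp (hM.2.2.symm ▸ ha)
  obtain ⟨b, hb⟩ : ∃ b, p.erase a = {b} :=
    card_eq_one.mp (by rw [card_erase_of_mem hap, hM.1 p hp])
  have hbp : b ∈ p.erase a := hb ▸ mem_singleton_self b
  have hpab : {a, b} = p := by rw [← hb, insert_erase hap]
  refine ⟨b, ⟨erase_subset_erase a (hM.subset hp) hbp, hpab ▸ hp⟩, fun c ⟨hca, hc⟩ => ?_⟩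
  have hpac : {a, c} = p :=
    hM.pairwiseDisjoint.elim_finset hc hp a (mem_insert_self a _) hap
  rw [← mem_singleton, ← hb, ← hpac]
  exact mem_erase.mpr ⟨ne_of_mem_erase hca, mem_insert_of_mem (mem_singleton_self c)⟩

end IsPerfectMatching

lemma isPerfectMatching_empty : IsPerfectMatching ∅ M ↔ M = ∅ := by
  refine ⟨fun hM => eq_empty_of_forall_notMem fun p hp => ?_, ?_⟩
  · have hp_empty : p = ∅ := subset_empty.mp (hM.subset hp)
    simpa [hp_empty] using hM.1 p hp
  · rintro rfl
    simp [IsPerfectMatching]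

/-- The finite set `PM(A)` of all perfect matchings of `A`, cut out of the sets of pairs in `A` so
that the ambient type need not be finite. -/
noncomputable def perfectMatchings (A : Finset α) : Finset (Finset (Finset α)) :=
  {M ∈ (A.powersetCard 2).powerset | IsPerfectMatching A M}

lemma mem_perfectMatchings : M ∈ perfectMatchings A ↔ IsPerfectMatching A M := by
  rw [perfectMatchings, mem_filter, mem_powerset, and_iff_right_iff_imp]
  exact fun hM p hp => hM.mem_powersetCard hp

lemma card_perfectMatchings_filter_mem (hp : p ∈ A.powersetCard 2) :
    #{M ∈ perfectMatchings A | p ∈ M} = #(perfectMatchings (A \ p)) := by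
  refine card_bij' (fun M _ => M.erase p) (fun M _ => insert p M) ?_ ?_ ?_ ?_ <;>
    simp only [mem_filter, mem_perfectMatchings]
  · exact fun M hM => hM.1.erase hM.2
  · exact fun M hM => ⟨hM.insert hp, mem_insert_self p M⟩
  · exact fun M hM => insert_erase hM.2
  · exact fun M hM => erase_insert hM.notMem_of_sdiff

lemma card_perfectMatchings_eq_sum (ha : a ∈ A) :
    #(perfectMatchings A) = ∑ b ∈ A.erase a, #(perfectMatchings (A \ {a, b})) := by
  have hpartner : ∀ M ∈ perfectMatchings A, #{b ∈ A.erase a | {a, b} ∈ M} = 1 := by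
    intro M hM
    have h := (mem_perfectMatchings.mp hM).existsUnique_pair_mem ha
    simpa only [card_eq_one, singleton_iff_unique_mem, mem_filter] using h
  calc
    #(perfectMatchings A) = ∑ M ∈ perfectMatchings A, #{b ∈ A.erase a | {a, b} ∈ M} := by
      rw [sum_congr rfl hpartner, card_eq_sum_ones]
    _ = ∑ b ∈ A.erase a, #{M ∈ perfectMatchings A | {a, b} ∈ M} := by
      simpa only [bipartiteAbove, bipartiteBelow] using
        sum_card_bipartiteAbove_eq_sum_card_bipartiteBelow
          (s := perfectMatchings A) (t := A.erase a) fun M b => {a, b} ∈ M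
    _ = ∑ b ∈ A.erase a, #(perfectMatchings (A \ {a, b})) :=
      sum_congr rfl fun b hb =>
        card_perfectMatchings_filter_mem (pair_mem_powersetCard_two ha hb)

-- For `m = 0` the truncated `2 * m - 1` is `0`, and `0‼ = 1`.
lemma card_perfectMatchings {m : ℕ} (hA : #A = 2 * m) :
    #(perfectMatchings A) = (2 * m - 1)‼ := by
  induction m generalizing A with
  | zero =>
    obtain rfl : A = ∅ := card_eq_zero.mp hA
    have hempty : perfectMatchings (∅ : Finset α) = {∅} := by
      ext M
      rw [mem_perfectMatchings, isPerfectMatching_empty, mem_singleton]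
    simp [hempty]
  | succ m ih =>
    obtain ⟨a, ha⟩ : A.Nonempty := card_pos.mp (by lia)
    have hcard : ∀ b ∈ A.erase a, #(A \ {a, b}) = 2 * m := by
      intro b hb
      rw [card_sdiff_of_mem_powersetCard (pair_mem_powersetCard_two ha hb), hA]
      rfl
    calc
      #(perfectMatchings A) = ∑ b ∈ A.erase a, (2 * m - 1)‼ := by
        rw [card_perfectMatchings_eq_sum ha]
        exact sum_congr rfl fun b hb => ih (hcard b hb)
      _ = (2 * m + 1) * (2 * m - 1)‼ := by
        rw [sum_const, smul_eq_mul, card_erase_of_mem ha, hA]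
        rfl
      _ = (2 * (m + 1) - 1)‼ := (Nat.doubleFactorial_add_one (2 * m)).symm

lemma odd_doubleFactorial_two_mul_sub_one (m : ℕ) : Odd (2 * m - 1)‼ := by
  induction m with
  | zero => exact odd_one
  | succ m ih =>
    have hsucc : (2 * (m + 1) - 1)‼ = (2 * m + 1) * (2 * m - 1)‼ :=
      Nat.doubleFactorial_add_one (2 * m)
    exact hsucc ▸ (odd_two_mul_add_one m).mul ih

lemma odd_card_perfectMatchings (hA : Even #A) : Odd #(perfectMatchings A) := by
  obtain ⟨m, hm⟩ := hA.two_dvd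
  exact card_perfectMatchings hm ▸ odd_doubleFactorial_two_mul_sub_one m

lemma odd_card_perfectMatchings_filter_mem_iff (hA : Even #A) :
    Odd #{M ∈ perfectMatchings A | p ∈ M} ↔ p ∈ A.powersetCard 2 := by
  constructor
  · intro hodd
    obtain ⟨M, hM⟩ := card_pos.mp hodd.pos
    rw [mem_filter, mem_perfectMatchings] at hM
    exact hM.1.mem_powersetCard hM.2
  · intro hp
    rw [card_perfectMatchings_filter_mem hp]
    apply odd_card_perfectMatchings
    rw [card_sdiff_of_mem_powersetCard hp]
    exact hA.tsub even_two

end PerfectMatching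

section CZ

variable {n : ℕ}

lemma czSet_powersetCard_two (A : Finset (Fin n)) : czSet (A.powersetCard 2) = czBlock A := rfl

lemma czSet_empty : czSet (∅ : Finset (Finset (Fin n))) = 1 := by
  simp [czSet]

lemma czSet_symmDiff (M N : Finset (Finset (Fin n))) :
    czSet (symmDiff M N) = czSet M * czSet N := by
  rw [czSet, czSet, czSet, diagonal_mul_diagonal]
  congr 1 with x
  exact prod_symmDiff_of_mul_self_eq_one (fun p _ => by split_ifs <;> norm_num)

lemma noncommProd_czSet (S : Finset (Finset (Finset (Fin n))))
    (hS : (S : Set (Finset (Finset (Fin n)))).Pairwise (Function.onFun Commute czSet)) :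
    S.noncommProd czSet hS = czSet {p | Odd #{M ∈ S | p ∈ M}} := by
  induction S using Finset.induction_on with
  | empty => simp [czSet_empty]
  | insert M S hM ih =>
    rw [noncommProd_insert_of_notMem _ _ _ _ hM, ih, ← czSet_symmDiff]
    congr 1
    ext p
    by_cases hp : p ∈ M <;>
      simp [mem_symmDiff, filter_insert, hp, hM, Nat.odd_add_one]

end CZ

/-- For `|A| = 2m`, `m ≥ 1`, the product over all perfect matchings `M` of `A`
of the operators `CZ_M` equals the complete CZ-block `CZ⟨A⟩`. -/
theorem prod_czSet_matchings_eq_czBlock {n : ℕ} (A : Finset (Fin n)) (m : ℕ)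
    (hm : 1 ≤ m) (hA : A.card = 2 * m) :
    Finset.noncommProd
      (Finset.univ.filter (fun M : Finset (Finset (Fin n)) => IsPerfectMatching A M))
      czSet (by intro M₁ _ M₂ _ _; exact czSet_commute M₁ M₂) = czBlock A := by
  have hPM : ({M | IsPerfectMatching A M} : Finset _) = perfectMatchings A := by
    ext M
    rw [mem_filter_univ, mem_perfectMatchings]
  have hodd : ({p | Odd #{M ∈ perfectMatchings A | p ∈ M}} : Finset _) = A.powersetCard 2 := by
    ext p
    rw [mem_filter_univ, odd_card_perfectMatchings_filter_mem_iff (hA ▸ even_two_mul m)]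
  refine (noncommProd_czSet _ _).trans ?_
  rw [hPM, hodd, czSet_powersetCard_two]
end

section
/- Let n ≥ 3, let S and S̄ be disjoint sets with S ∪ S̄ = {2,…,n−1}, and let U := CZ⟨S̄⟩ · P_{S̄} · H_S · CZ⟨S⟩ · P_S · H_S · CX_{S̄→S} (matrix product, rightmost factor acting first). Then for every k ∈ S̄: U · (X_1 X_k) · U† = X_1 · Y_k · X_S · Z_{S̄∖{k}}. (This is the logical Pauli-constraint mapping X_1 X_k ↦ X_1 Y_k X_S Z_{S̄∖{k}} realized by the compilation strategy C^H_mid for qubits carrying no Hadamard in the C-QSK.) -/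
open Complex Matrix Finset

noncomputable section

/-- The middle qubits `{2, …, n-1}` (qubit `i ∈ {1,…,n}` is index `i-1 : Fin n`). -/
def midSet (n : ℕ) : Finset (Fin n) :=
  Finset.univ.filter (fun j : Fin n => j.val ≠ 0 ∧ j.val ≠ n - 1)

/-- The compiled circuit of the strategy `C^H_mid`:
`U = CZ⟨S̄⟩ · P_{S̄} · H_S · CZ⟨S⟩ · P_S · H_S · CX_{S̄→S}`
(matrix product, rightmost factor acting first), where `Sb` plays the role of `S̄`. -/
def Umid {n : ℕ} (S Sb : Finset (Fin n)) : NOp n :=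
  czBlock Sb * layer Pg Sb * layer Hg S * czBlock S * layer Pg S * layer Hg S *
    cxBlock Sb S

end

/-!
Each factor of `U` is Clifford, so it suffices to carry the two Pauli operators `X_T` (with `T`
disjoint from `S ∪ S̄`) and `X_k` through `U` one factor at a time, using that `U` is unitary only
at the end. The operator `X_T` commutes with everything, while `X_k` evolves as
`X_k ↦ X_k X_S` (`CX`), `↦ X_k Z_S` (`H_S`, then fixed by `P_S` and `CZ⟨S⟩`), `↦ X_k X_S` (`H_S`),
`↦ Y_k X_S` (`P_S̄`), `↦ Y_k X_S Z_{S̄∖{k}}` (`CZ⟨S̄⟩`).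
The signs of `Z_A` and `CZ⟨A⟩` at a bit string with `w` ones in `A` are `(-1) ^ w` and
`(-1) ^ w.choose 2`.
-/

section TensorProduct

variable {ι κ R : Type*} [Fintype ι] [CommSemiring R]

/-- The tensor product `⨂ⱼ f j` of matrices indexed by `κ`, as a matrix indexed by `ι → κ`. -/
def tensorOp (f : ι → Matrix κ κ R) : Matrix (ι → κ) (ι → κ) R :=
  fun x y => ∏ j, f j (x j) (y j)

theorem tensorOp_mul [DecidableEq ι] [Fintype κ] (f g : ι → Matrix κ κ R) :
    tensorOp f * tensorOp g = tensorOp fun j => f j * g j := by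
  ext x y
  simp only [tensorOp, Matrix.mul_apply, ← Finset.prod_mul_distrib, Finset.prod_univ_sum,
    Fintype.piFinset_univ]

theorem tensorOp_one [DecidableEq κ] :
    tensorOp (fun _ : ι => (1 : Matrix κ κ R)) = 1 := by
  ext x y
  simp only [tensorOp, Matrix.one_apply, Finset.prod_ite_zero, Finset.mem_univ, true_imp_iff,
    Finset.prod_const_one, funext_iff]

theorem conjTranspose_tensorOp [StarRing R] (f : ι → Matrix κ κ R) :
    (tensorOp f)ᴴ = tensorOp fun j => (f j)ᴴ := by
  ext x y
  simp only [tensorOp, Matrix.conjTranspose_apply, star_prod]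

theorem tensorOp_semiconjBy [DecidableEq ι] [Fintype κ] {u f g : ι → Matrix κ κ R}
    (h : ∀ j, SemiconjBy (u j) (f j) (g j)) :
    SemiconjBy (tensorOp u) (tensorOp f) (tensorOp g) := by
  rw [SemiconjBy, tensorOp_mul, tensorOp_mul]
  exact congrArg tensorOp (funext fun j => (h j).eq)

end TensorProduct

theorem tensorOp_mem_unitaryGroup {ι κ R : Type*} [Fintype ι] [DecidableEq ι] [Fintype κ]
    [DecidableEq κ] [CommRing R] [StarRing R] {f : ι → Matrix κ κ R}
    (hf : ∀ j, f j ∈ unitaryGroup κ R) : tensorOp f ∈ unitaryGroup (ι → κ) R := by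
  rw [mem_unitaryGroup_iff, star_eq_conjTranspose, conjTranspose_tensorOp, tensorOp_mul,
    ← tensorOp_one]
  exact congrArg tensorOp (funext fun j => mem_unitaryGroup_iff.mp (hf j))

section BasisOp

variable {β R : Type*} [DecidableEq β]

/-- The operator sending the basis state `y` to the basis state `f y`. -/
def basisOp [Zero R] [One R] (f : β → β) : Matrix β β R :=
  fun x y => if x = f y then 1 else 0

theorem basisOp_mul [Fintype β] [NonAssocSemiring R] (f g : β → β) :
    (basisOp f * basisOp g : Matrix β β R) = basisOp (f ∘ g) := by
  ext x y
  simp [basisOp, Matrix.mul_apply]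

theorem basisOp_semiconjBy [Fintype β] [NonAssocSemiring R] {u f g : β → β}
    (h : Function.Semiconj u f g) :
    SemiconjBy (basisOp u : Matrix β β R) (basisOp f) (basisOp g) := by
  rw [SemiconjBy, basisOp_mul, basisOp_mul, h.comp_eq]

theorem basisOp_mem_unitaryGroup [Fintype β] [CommRing R] [StarRing R] {f : β → β}
    (hf : Function.Involutive f) : (basisOp f : Matrix β β R) ∈ unitaryGroup β R := by
  have hstar : star (basisOp f : Matrix β β R) = basisOp f := by
    ext x y
    simp only [basisOp, star_apply, apply_ite star, star_one, star_zero, eq_comm (a := y),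
      hf.eq_iff]
  rw [mem_unitaryGroup_iff, hstar, basisOp_mul, hf.comp_self]
  ext x y
  simp only [basisOp, id, Matrix.one_apply]

end BasisOp

theorem diagonal_mem_unitaryGroup {β R : Type*} [Fintype β] [DecidableEq β] [CommRing R]
    [StarRing R] {d : β → R} (hd : ∀ x, d x * star (d x) = 1) :
    diagonal d ∈ unitaryGroup β R := by
  rw [mem_unitaryGroup_iff, star_eq_conjTranspose, diagonal_conjTranspose,
    diagonal_mul_diagonal, ← diagonal_one]
  exact congrArg diagonal (funext hd)

theorem diagonal_semiconjBy {β R : Type*} [Fintype β] [DecidableEq β] [CommSemiring R]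
    {d e : β → R} {M : Matrix β β R} (h : ∀ x y, M x y ≠ 0 → d x = e y * d y) :
    SemiconjBy (diagonal d) M (M * diagonal e) := by
  ext x y
  rw [diagonal_mul, mul_diagonal, mul_diagonal]
  by_cases hM : M x y = 0
  · simp only [hM, mul_zero, zero_mul]
  · rw [h x y hM, mul_comm, mul_assoc]

theorem Pg_mem_unitaryGroup : Pg ∈ unitaryGroup Bool ℂ :=
  diagonal_mem_unitaryGroup fun a => by cases a <;> simp

theorem Hg_mem_unitaryGroup : Hg ∈ unitaryGroup Bool ℂ := by
  have hsq : ((Real.sqrt 2 : ℝ) : ℂ)⁻¹ * ((Real.sqrt 2 : ℝ) : ℂ)⁻¹ = 1 / 2 := by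
    rw [← mul_inv, ← Complex.ofReal_mul, Real.mul_self_sqrt zero_le_two, ofReal_ofNat, one_div]
  rw [mem_unitaryGroup_iff]
  ext a b
  cases a <;> cases b <;> norm_num [Hg, Matrix.mul_apply, star_apply, hsq]

theorem Hg_semiconjBy_Xg_Zg : SemiconjBy Hg Xg Zg := by
  ext a b
  cases a <;> cases b <;> simp [Hg, Xg, Zg, Matrix.mul_apply]

theorem Hg_semiconjBy_Zg_Xg : SemiconjBy Hg Zg Xg := by
  ext a b
  cases a <;> cases b <;> simp [Hg, Xg, Zg, Matrix.mul_apply]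

theorem Pg_semiconjBy_Xg_Yg : SemiconjBy Pg Xg Yg := by
  ext a b
  cases a <;> cases b <;> simp [Pg, Xg, Yg, Matrix.mul_apply, diagonal_apply]

theorem Pg_commute_Zg : Commute Pg Zg :=
  commute_diagonal _ _

theorem Yg_apply_self (b : Bool) : Yg b b = 0 :=
  if_pos rfl

section Layer

variable {n : ℕ} {A B : Finset (Fin n)} {g : Matrix Bool Bool ℂ}

theorem layer_eq_tensorOp (g : Matrix Bool Bool ℂ) (A : Finset (Fin n)) :
    layer g A = tensorOp fun j => if j ∈ A then g else 1 := by
  ext x y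
  refine Finset.prod_congr rfl fun j _ => ?_
  split_ifs <;> simp_all [Matrix.one_apply]

theorem layer_union_of_disjoint (g : Matrix Bool Bool ℂ) (hAB : Disjoint A B) :
    layer g (A ∪ B) = layer g A * layer g B := by
  simp only [layer_eq_tensorOp, tensorOp_mul]
  refine congrArg tensorOp (funext fun j => ?_)
  have hj : j ∈ A → j ∉ B := fun hA hB => Finset.disjoint_left.mp hAB hA hB
  by_cases hA : j ∈ A <;> by_cases hB : j ∈ B <;> simp_all

theorem layer_semiconjBy {a b : Matrix Bool Bool ℂ} (hBA : B ⊆ A) (hg : SemiconjBy g a b) :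
    SemiconjBy (layer g A) (layer a B) (layer b B) := by
  simp only [layer_eq_tensorOp]
  refine tensorOp_semiconjBy fun j => ?_
  by_cases hB : j ∈ B
  · simpa only [hB, hBA hB, if_true] using hg
  · simpa only [hB, if_false] using SemiconjBy.one_right _

theorem layer_commute_of_disjoint (g h : Matrix Bool Bool ℂ) (hAB : Disjoint A B) :
    Commute (layer g A) (layer h B) := by
  simp only [layer_eq_tensorOp]
  refine tensorOp_semiconjBy fun j => ?_
  by_cases hA : j ∈ A
  · simpa only [Finset.disjoint_left.mp hAB hA, if_false] using SemiconjBy.one_right _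
  · simpa only [hA, if_false] using SemiconjBy.one_left _

theorem layer_mem_unitaryGroup (hg : g ∈ unitaryGroup Bool ℂ) (A : Finset (Fin n)) :
    layer g A ∈ unitaryGroup (Fin n → Bool) ℂ := by
  rw [layer_eq_tensorOp]
  refine tensorOp_mem_unitaryGroup fun j => ?_
  split_ifs
  exacts [hg, one_mem _]

theorem apply_ne_zero_of_layer_ne_zero {x y : Fin n → Bool} (hxy : layer g A x y ≠ 0)
    {j : Fin n} (hj : j ∈ A) : g (x j) (y j) ≠ 0 := by
  simpa only [hj, if_true] using Finset.prod_ne_zero_iff.mp hxy j (Finset.mem_univ j)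

theorem eq_of_layer_ne_zero {x y : Fin n → Bool} (hxy : layer g A x y ≠ 0)
    {j : Fin n} (hj : j ∉ A) : x j = y j := by
  by_contra hne
  exact Finset.prod_ne_zero_iff.mp hxy j (Finset.mem_univ j) (by simp only [hj, hne, if_false])

end Layer

section BitWeight

variable {ι : Type*} {A : Finset ι} {x y : ι → Bool}

/-- The Hamming weight of the bit string `x` restricted to `A`. -/
def bitWeight (A : Finset ι) (x : ι → Bool) : ℕ :=
  (A.filter fun i => x i = true).card

theorem bitWeight_congr (h : ∀ i ∈ A, x i = y i) : bitWeight A x = bitWeight A y :=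
  congrArg Finset.card (Finset.filter_congr fun i hi => by rw [h i hi])

theorem bitWeight_insert [DecidableEq ι] {k : ι} (hk : k ∉ A) (x : ι → Bool) :
    bitWeight (insert k A) x = (x k).toNat + bitWeight A x := by
  cases hx : x k <;> simp [bitWeight, Finset.filter_insert, hx, hk, add_comm]

theorem bodd_bitWeight_xor (A : Finset ι) (x y : ι → Bool) :
    (bitWeight A fun i => xor (x i) (y i)).bodd =
      xor (bitWeight A x).bodd (bitWeight A y).bodd := by
  classical
  induction A using Finset.induction_on with
  | empty => simp [bitWeight]
  | insert k A hk ih =>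
    simp only [bitWeight_insert hk, Nat.bodd_add, ih]
    cases x k <;> cases y k <;> simp

theorem prod_powersetCard_ite {M : Type*} [CommMonoid M] (m : ℕ) (A : Finset ι) (x : ι → Bool)
    [DecidablePred fun p : Finset ι => ∀ i ∈ p, x i = true] (a : M) :
    ∏ p ∈ A.powersetCard m, (if ∀ i ∈ p, x i = true then a else 1) =
      a ^ (bitWeight A x).choose m := by
  have hfilter : ((A.powersetCard m).filter fun p => ∀ i ∈ p, x i = true) =
      (A.filter fun i => x i = true).powersetCard m := by
    ext p
    simp only [Finset.mem_filter, Finset.mem_powersetCard, Finset.subset_iff]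
    grind
  rw [Finset.prod_ite, Finset.prod_const, Finset.prod_const_one, mul_one, hfilter,
    Finset.card_powersetCard, bitWeight]

end BitWeight

section DiagonalLayers

variable {n : ℕ}

theorem layer_Zg_eq_diagonal (A : Finset (Fin n)) :
    layer Zg A = diagonal fun x => (-1) ^ bitWeight A x := by
  ext x y
  by_cases hxy : x = y
  · subst hxy
    simp [layer, Zg, bitWeight, Finset.prod_ite_mem, Finset.prod_ite]
  · obtain ⟨j, hj⟩ := Function.ne_iff.mp hxy
    rw [diagonal_apply_ne _ hxy]
    exact Finset.prod_eq_zero (Finset.mem_univ j) (by simp [Zg, hj])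

theorem czBlock_eq_diagonal (A : Finset (Fin n)) :
    czBlock A = diagonal fun x => (-1) ^ (bitWeight A x).choose 2 :=
  congrArg diagonal (funext fun x => prod_powersetCard_ite 2 A x (-1))

theorem czBlock_mem_unitaryGroup (A : Finset (Fin n)) :
    czBlock A ∈ unitaryGroup (Fin n → Bool) ℂ := by
  rw [czBlock_eq_diagonal]
  exact diagonal_mem_unitaryGroup fun x => by simp [← mul_pow]

theorem czBlock_commute_layer_Zg (A B : Finset (Fin n)) :
    Commute (czBlock A) (layer Zg B) := by
  rw [layer_Zg_eq_diagonal]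
  exact commute_diagonal _ _

theorem czBlock_commute_layer_of_disjoint {A B : Finset (Fin n)} (hAB : Disjoint A B)
    (g : Matrix Bool Bool ℂ) : Commute (czBlock A) (layer g B) := by
  rw [czBlock_eq_diagonal]
  have h := diagonal_semiconjBy (M := layer g B) (e := 1)
    (d := fun x => (-1) ^ (bitWeight A x).choose 2) fun x y hxy => by
      have hw : bitWeight A x = bitWeight A y := bitWeight_congr fun i hi =>
        eq_of_layer_ne_zero hxy (Finset.disjoint_left.mp hAB hi)
      rw [hw, Pi.one_apply, one_mul]
  rwa [Pi.one_def, diagonal_one, mul_one] at h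

-- Flipping bit `k` changes the weight between `w` and `w + 1`, where `w` is the weight on
-- `A.erase k`, and `(w + 1).choose 2 = w.choose 2 + w`: this is the sign of `Z` on `A.erase k`.
theorem czBlock_semiconjBy_layer_singleton {A : Finset (Fin n)} {k : Fin n} (hk : k ∈ A)
    {g : Matrix Bool Bool ℂ} (hg : ∀ b, g b b = 0) :
    SemiconjBy (czBlock A) (layer g {k}) (layer g {k} * layer Zg (A.erase k)) := by
  rw [czBlock_eq_diagonal, layer_Zg_eq_diagonal]
  refine diagonal_semiconjBy fun x y hxy => ?_
  have hflip : x k ≠ y k := fun hxk =>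
    apply_ne_zero_of_layer_ne_zero hxy (Finset.mem_singleton_self k) (by rw [hxk, hg])
  have herase : bitWeight (A.erase k) x = bitWeight (A.erase k) y := bitWeight_congr fun i hi =>
    eq_of_layer_ne_zero hxy (Finset.notMem_singleton.mpr (Finset.ne_of_mem_erase hi))
  have hweight (z : Fin n → Bool) :
      bitWeight A z = (z k).toNat + bitWeight (A.erase k) z := by
    rw [← bitWeight_insert (Finset.notMem_erase k A), Finset.insert_erase hk]
  have hchoose (w : ℕ) : (1 + w).choose 2 = w + w.choose 2 := by
    rw [add_comm, Nat.choose_succ_succ', Nat.choose_one_right]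
  rw [hweight x, hweight y, herase]
  generalize bitWeight (A.erase k) y = w
  revert hflip
  cases x k <;> cases y k <;> simp [hchoose, pow_add, ← mul_assoc, ← mul_pow]

end DiagonalLayers

section CXBlock

variable {n : ℕ} {A B : Finset (Fin n)}

theorem layer_Xg_eq_basisOp (A : Finset (Fin n)) :
    layer Xg A = basisOp fun y j => xor (y j) (decide (j ∈ A)) := by
  rw [layer_eq_tensorOp]
  ext x y
  have hentry (j : Fin n) : (if j ∈ A then Xg else 1) (x j) (y j) =
      if x j = xor (y j) (decide (j ∈ A)) then 1 else 0 := by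
    by_cases hj : j ∈ A <;> cases x j <;> cases y j <;> simp [hj, Xg]
  simp only [tensorOp, basisOp, hentry, Finset.prod_ite_zero, Finset.mem_univ, true_imp_iff,
    Finset.prod_const_one, funext_iff]

/-- The action of `CX_{A→B}` on bit strings, an `𝔽₂`-linear map. -/
def cxMap (A B : Finset (Fin n)) (y : Fin n → Bool) : Fin n → Bool :=
  fun j => if j ∈ B then xor (y j) (bitWeight A y).bodd else y j

theorem cxBlock_eq_basisOp (A B : Finset (Fin n)) : cxBlock A B = basisOp (cxMap A B) :=
  rfl

theorem cxMap_xor (A B : Finset (Fin n)) (x y : Fin n → Bool) :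
    (cxMap A B fun j => xor (x j) (y j)) = fun j => xor (cxMap A B x j) (cxMap A B y j) := by
  funext j
  simp only [cxMap, bodd_bitWeight_xor]
  split_ifs
  · simp only [Bool.xor_assoc, Bool.xor_left_comm (y j)]
  · rfl

theorem cxMap_involutive (hAB : Disjoint A B) : Function.Involutive (cxMap A B) := by
  intro y
  have hweight : bitWeight A (cxMap A B y) = bitWeight A y :=
    bitWeight_congr fun i hi => if_neg (Finset.disjoint_left.mp hAB hi)
  funext j
  rw [cxMap, hweight]
  by_cases hj : j ∈ B <;> simp [cxMap, hj]

theorem cxBlock_mem_unitaryGroup (hAB : Disjoint A B) :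
    cxBlock A B ∈ unitaryGroup (Fin n → Bool) ℂ :=
  basisOp_mem_unitaryGroup (cxMap_involutive hAB)

theorem cxBlock_semiconjBy_layer_Xg {T T' : Finset (Fin n)}
    (hT : (cxMap A B fun j => decide (j ∈ T)) = fun j => decide (j ∈ T')) :
    SemiconjBy (cxBlock A B) (layer Xg T) (layer Xg T') := by
  rw [cxBlock_eq_basisOp, layer_Xg_eq_basisOp, layer_Xg_eq_basisOp]
  refine basisOp_semiconjBy fun y => ?_
  rw [cxMap_xor, hT]

theorem cxBlock_commute_layer_Xg_of_disjoint {T : Finset (Fin n)} (hAT : Disjoint A T)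
    (B : Finset (Fin n)) : Commute (cxBlock A B) (layer Xg T) := by
  have hweight : bitWeight A (fun j => decide (j ∈ T)) = 0 := by
    simpa [bitWeight, Finset.filter_eq_empty_iff] using Finset.disjoint_left.mp hAT
  refine cxBlock_semiconjBy_layer_Xg (funext fun j => ?_)
  simp [cxMap, hweight]

theorem cxBlock_semiconjBy_layer_Xg_singleton (hAB : Disjoint A B) {k : Fin n} (hk : k ∈ A) :
    SemiconjBy (cxBlock A B) (layer Xg {k}) (layer Xg {k} * layer Xg B) := by
  have hkB : k ∉ B := Finset.disjoint_left.mp hAB hk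
  rw [← layer_union_of_disjoint Xg (Finset.disjoint_singleton_left.mpr hkB)]
  have hweight : bitWeight A (fun j => decide (j = k)) = 1 := by
    simp [bitWeight, Finset.filter_eq', hk]
  refine cxBlock_semiconjBy_layer_Xg (funext fun j => ?_)
  by_cases hj : j ∈ B
  · simp [cxMap, hweight, hj, ne_of_mem_of_not_mem hj hkB]
  · simp [cxMap, hj]

end CXBlock

section Umid

variable {n : ℕ} {S Sb : Finset (Fin n)}

theorem Umid_mem_unitaryGroup (hdisj : Disjoint S Sb) :
    Umid S Sb ∈ unitaryGroup (Fin n → Bool) ℂ := by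
  have hP (A : Finset (Fin n)) := layer_mem_unitaryGroup Pg_mem_unitaryGroup A
  have hH := layer_mem_unitaryGroup Hg_mem_unitaryGroup S
  have hCZ (A : Finset (Fin n)) := czBlock_mem_unitaryGroup A
  have hCX := cxBlock_mem_unitaryGroup hdisj.symm
  unfold Umid
  exact mul_mem (mul_mem (mul_mem (mul_mem (mul_mem (mul_mem (hCZ Sb) (hP Sb)) hH) (hCZ S))
    (hP S)) hH) hCX

theorem Umid_commute_layer_Xg {T : Finset (Fin n)} (hS : Disjoint S T) (hSb : Disjoint Sb T) :
    Commute (Umid S Sb) (layer Xg T) := by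
  have hH := layer_commute_of_disjoint Hg Xg hS
  have hP := layer_commute_of_disjoint Pg Xg hS
  have hPb := layer_commute_of_disjoint Pg Xg hSb
  have hCZ := czBlock_commute_layer_of_disjoint hS Xg
  have hCZb := czBlock_commute_layer_of_disjoint hSb Xg
  have hCX := cxBlock_commute_layer_Xg_of_disjoint hSb S
  unfold Umid
  exact (((((hCZb.mul_left hPb).mul_left hH).mul_left hCZ).mul_left hP).mul_left hH).mul_left hCX

theorem Umid_semiconjBy_layer_Xg_singleton (hdisj : Disjoint S Sb) {k : Fin n} (hk : k ∈ Sb) :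
    SemiconjBy (Umid S Sb) (layer Xg {k})
      (layer Yg {k} * layer Xg S * layer Zg (Sb.erase k)) := by
  have hkSb : {k} ⊆ Sb := Finset.singleton_subset_iff.mpr hk
  have hSk : Disjoint S {k} := hdisj.mono_right hkSb
  have hCX : SemiconjBy (cxBlock Sb S) (layer Xg {k}) (layer Xg {k} * layer Xg S) :=
    cxBlock_semiconjBy_layer_Xg_singleton hdisj.symm hk
  have hH : SemiconjBy (layer Hg S) (layer Xg {k} * layer Xg S) (layer Xg {k} * layer Zg S) :=
    SemiconjBy.mul_right (layer_commute_of_disjoint Hg Xg hSk)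
      (layer_semiconjBy Finset.Subset.rfl Hg_semiconjBy_Xg_Zg)
  have hP : Commute (layer Pg S) (layer Xg {k} * layer Zg S) :=
    (layer_commute_of_disjoint Pg Xg hSk).mul_right
      (layer_semiconjBy Finset.Subset.rfl Pg_commute_Zg)
  have hCZ : Commute (czBlock S) (layer Xg {k} * layer Zg S) :=
    (czBlock_commute_layer_of_disjoint hSk Xg).mul_right (czBlock_commute_layer_Zg S S)
  have hH' : SemiconjBy (layer Hg S) (layer Xg {k} * layer Zg S) (layer Xg {k} * layer Xg S) :=
    SemiconjBy.mul_right (layer_commute_of_disjoint Hg Xg hSk)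
      (layer_semiconjBy Finset.Subset.rfl Hg_semiconjBy_Zg_Xg)
  have hPb : SemiconjBy (layer Pg Sb) (layer Xg {k} * layer Xg S) (layer Yg {k} * layer Xg S) :=
    (layer_semiconjBy hkSb Pg_semiconjBy_Xg_Yg).mul_right
      (layer_commute_of_disjoint Pg Xg hdisj.symm)
  have hCZb : SemiconjBy (czBlock Sb) (layer Yg {k} * layer Xg S)
      (layer Yg {k} * layer Xg S * layer Zg (Sb.erase k)) := by
    have hXZ : Commute (layer Xg S) (layer Zg (Sb.erase k)) :=
      layer_commute_of_disjoint Xg Zg (hdisj.mono_right (Finset.erase_subset k Sb))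
    rw [mul_assoc, hXZ.eq, ← mul_assoc]
    exact (czBlock_semiconjBy_layer_singleton hk Yg_apply_self).mul_right
      (czBlock_commute_layer_of_disjoint hdisj.symm Xg)
  unfold Umid
  exact (((((hCZb.mul_left hPb).mul_left hH').mul_left hCZ).mul_left hP).mul_left hH).mul_left hCX

end Umid

theorem Umid_pauli_constraint_no_hadamard_general {n : ℕ} {S Sb T : Finset (Fin n)}
    (hdisj : Disjoint S Sb) (hT : Disjoint (S ∪ Sb) T) {k : Fin n} (hk : k ∈ Sb) :
    Umid S Sb * (layer Xg T * layer Xg {k}) * (Umid S Sb)ᴴ =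
      layer Xg T * layer Yg {k} * layer Xg S * layer Zg (Sb.erase k) := by
  obtain ⟨hST, hSbT⟩ := Finset.disjoint_union_left.mp hT
  have hpush : SemiconjBy (Umid S Sb) (layer Xg T * layer Xg {k})
      (layer Xg T * (layer Yg {k} * layer Xg S * layer Zg (Sb.erase k))) :=
    SemiconjBy.mul_right (Umid_commute_layer_Xg hST hSbT)
      (Umid_semiconjBy_layer_Xg_singleton hdisj hk)
  have hunitary : Umid S Sb * (Umid S Sb)ᴴ = 1 :=
    mem_unitaryGroup_iff.mp (Umid_mem_unitaryGroup hdisj)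
  rw [hpush.eq, mul_assoc, hunitary, mul_one]
  simp only [mul_assoc]

/-- Logical Pauli constraint of `C^H_mid` for qubits without Hadamard:
for `k ∈ S̄`, `U (X_1 X_k) U† = X_1 Y_k X_S Z_{S̄∖{k}}`
(qubit `1` is index `⟨0,_⟩ : Fin n`). -/
theorem Umid_pauli_constraint_no_hadamard (n : ℕ) (hn : 3 ≤ n)
    (S Sb : Finset (Fin n)) (hdisj : Disjoint S Sb) (hunion : S ∪ Sb = midSet n) :
    ∀ k ∈ Sb,
      Umid S Sb * (layer Xg {(⟨0, by omega⟩ : Fin n)} * layer Xg {k}) * (Umid S Sb)ᴴ =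
        layer Xg {(⟨0, by omega⟩ : Fin n)} * layer Yg {k} * layer Xg S *
          layer Zg (Sb.erase k) :=
  fun _ hk => Umid_pauli_constraint_no_hadamard_general hdisj
    (by simp [hunion, midSet]) hk
end
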